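/- For all β(0,1)-trees T_1, …, T_k (k ≥ 1), g(σ(T_1,…,T_k)) = ρ(g(T_1),…,g(T_k)). -/

import Mathlib

/-!
The recursive description of `g` does almost all the work. Write `Ts = L ++ [T]` and
`S = ρ(reverse L, ε)`, so that `σ(Ts) = μ₁(S, T)`. Unfolding one step,
`g(S) = σ(g(reverse L), ε) = μ₁(ρ(g(L), ε), ε) = ρ(g(L), ε)`, which settles `T = ε`. If `T` is
nontrivial, then `g(μ₁(S, T)) = ν₁(g(S), g(T)) = ν₁(ρ(g(L), ε), g(T))`, and attaching `g(T)` at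
the rightmost leaf of `ρ(g(L), ε)` gives `ρ(g(L), g(T))`.

What has to be checked is that the encoding of `g` really performs these steps.
* `decT` recovers the pair `(T, S)` from `μ₁(S, T)` (`decT_muT`): `μ₁` makes all labels from the
  root to the insertion point positive, and what it appends there is exactly the maximal suffix of
  zero-labeled children.
* The index recovered from the statistic `open` is at most `1`, since `μ₁(S, T)` has just one open
  node, its rightmost leaf (`countP_isOpenNode_muT`): nodes above the first open node of `T` stay
  closed because excessive nodes on the rightmost path stay excessive.
* The value of `gF` on a β(0,1)-tree does not depend on the fuel once it is at least the number of
  nodes (`gF_eq_gF`), because `decT` splits a β(0,1)-tree of root label at least `2` into two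
  strictly smaller β(0,1)-trees.
-/

/-- Labeled rooted plane trees: each node carries a natural-number label and an
ordered list of subtrees. -/
inductive BTree : Type
  | node : ℕ → List BTree → BTree
deriving Repr

namespace BTree

/-- The trivial β(0,1)-tree ε: a single node labeled 0. -/
def eps : BTree := node 0 []

/-- The label of the root of a tree. -/
def label : BTree → ℕ
  | node n _ => n

/-- The list of subtrees of the root. -/
def children : BTree → List BTree
  | node _ ts => ts

/-- The sum of the labels of the children of the root. -/
def childSum (t : BTree) : ℕ := (t.children.map label).sum

/-- Validity condition for non-root nodes of a β(0,1)-tree: leaves have label 0,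
and the label of every node exceeds the sum of its children's labels by at most one. -/
inductive ValidSub : BTree → Prop
  | mk (n : ℕ) (ts : List BTree) :
      (ts = [] → n = 0) →
      n ≤ (ts.map label).sum + 1 →
      (∀ t ∈ ts, ValidSub t) →
      ValidSub (node n ts)

/-- `t` is a β(0,1)-tree: the trivial tree is the single node labeled 0; otherwise the
root label is one more than the sum of its children's labels, and every non-root node
has label at most one more than the sum of its children's labels, leaves having label 0. -/
def IsBeta (t : BTree) : Prop :=
  (t.children = [] → t.label = 0) ∧
  (t.children ≠ [] → t.label = childSum t + 1) ∧
  ∀ c ∈ t.children, ValidSub c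

mutual
/-- The rightmost path of a tree, from the root to the rightmost leaf; each node on
the path is recorded together with its full subtree. -/
def rpath : BTree → List BTree
  | node n ts => node n ts :: rpathL ts
def rpathL : List BTree → List BTree
  | [] => []
  | [t] => rpath t
  | _ :: t :: ts => rpathL (t :: ts)
end

/-- A node is moderate if its label does not exceed the sum of its children's labels. -/
def moderate (t : BTree) : Bool := decide (t.label ≤ childSum t)

/-- A node (on the rightmost path) is open iff it is a leaf (i.e. it is the rightmost
leaf), or its rightmost child is a non-leaf moderate node. -/
def isOpenNode (t : BTree) : Bool :=
  match t.children.getLast? with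
  | none => true
  | some c => !c.children.isEmpty && moderate c

/-- The statistic `root`: the label of the root. -/
def rootStat (t : BTree) : ℕ := t.label

/-- The statistic `open`: the number of open nodes (all of which lie on the
rightmost path), with open(ε) = 0. -/
def openStat : BTree → ℕ
  | node 0 [] => 0
  | t => (rpath t).countP isOpenNode

/-- The statistic `rmod`: the number of moderate nodes on the rightmost path,
with rmod(ε) = 0. -/
def rmodStat : BTree → ℕ
  | node 0 [] => 0
  | t => (rpath t).countP moderate

mutual
/-- The number of nodes of a tree. -/
def size : BTree → ℕ
  | node _ ts => 1 + sizeL ts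
def sizeL : List BTree → ℕ
  | [] => 0
  | t :: ts => size t + sizeL ts
end

mutual
/-- The number of excessive nodes of a tree (nodes whose label exceeds the sum of the
labels of their children). -/
def excT : BTree → ℕ
  | node n ts => (if (ts.map label).sum < n then 1 else 0) + excL ts
def excL : List BTree → ℕ
  | [] => 0
  | t :: ts => excT t + excL ts
end

/-- The sum U ⊕ V of two trees: identify the two roots into a new root labeled
root(U) + root(V) − 1, its children being those of U followed by those of V. -/
def oplus (u v : BTree) : BTree := node (u.label + v.label - 1) (u.children ++ v.children)

/-- Relabel the root. -/
def setLabel (i : ℕ) (t : BTree) : BTree := node i t.children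

/-- λ_i(T): join a new root, labeled i+1, by an edge to the old root, which is relabeled i. -/
def lam (i : ℕ) (t : BTree) : BTree := node (i + 1) [setLabel i t]

/-- Iterated ⊕ of a list of trees (ε for the empty list). -/
def oplusList : List BTree → BTree
  | [] => eps
  | [t] => t
  | t :: ts => oplus t (oplusList ts)

/-- ρ(T₁,…,T_k) = λ₀(T₁) ⊕ ⋯ ⊕ λ₀(T_k). -/
def rho (Ts : List BTree) : BTree := oplusList (Ts.map (lam 0))

/-- Add one to the label of the root. -/
def incRoot (t : BTree) : BTree := node (t.label + 1) t.children

mutual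
/-- Walk down the rightmost path of a tree looking for the i-th open node x, adding one
to each label on the way (through x, and through the rightmost child y of x if x is not
a leaf); at x, append the children of S. -/
def muT (S : BTree) : ℕ → BTree → BTree
  | i, node n ts =>
    if isOpenNode (node n ts) && decide (i ≤ 1) then
      if ts.isEmpty then node (n + 1) S.children
      else node (n + 1) (ts.dropLast ++ [incRoot (ts.getLastD eps)] ++ S.children)
    else
      node (n + 1) (muL S (if isOpenNode (node n ts) then i - 1 else i) ts)
def muL (S : BTree) (i : ℕ) : List BTree → List BTree
  | [] => []
  | [t] => [muT S i t]
  | t :: ts => t :: muL S i ts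
end

/-- μ_i(S,T): identify the i-th open node x on the rightmost path of T with the root of
S, keeping the label of x, and add one to each node on the rightmost path of T between
the root and y (inclusive), where y = x if x is a leaf and otherwise y is the rightmost
child of x.  (In particular μ₁(S,ε) = S when root(S) = 1.) -/
def mu (i : ℕ) (S T : BTree) : BTree := muT S i T

mutual
/-- Walk down the rightmost path of a tree adding j to every label; at the rightmost
leaf, attach the children of T. -/
def nuT (T : BTree) (j : ℕ) : BTree → BTree
  | node n [] => node (n + j) T.children
  | node n ts => node (n + j) (nuL T j ts)
def nuL (T : BTree) (j : ℕ) : List BTree → List BTree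
  | [] => []
  | [t] => [nuT T j t]
  | t :: ts => t :: nuL T j ts
end

/-- ν_i(S,T): identify the rightmost leaf x of S with the root of T, keeping the zero
label of x, and add i − 1 to each node on the rightmost path of S between the root and
x (inclusive).  (In particular ν₁(S,ε) = S.) -/
def nu (i : ℕ) (S T : BTree) : BTree := nuT T (i - 1) S

/-- σ(T₁,…,T_k) = μ₁(ρ(T_{k−1},…,T₁,ε), T_k). -/
def sigma (Ts : List BTree) : BTree :=
  mu 1 (rho (Ts.dropLast.reverse ++ [eps])) (Ts.getLastD eps)

/-- The maximal suffix of a list of trees all of whose root labels are 0. -/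
def zeroSuffix : List BTree → List BTree
  | [] => []
  | t :: ts =>
    let z := zeroSuffix ts
    if z.length = ts.length ∧ t.label = 0 then t :: z else z

/-- Subtract one from the label of the root. -/
def decRoot (t : BTree) : BTree := node (t.label - 1) t.children

mutual
/-- Inverse of μ on β(0,1)-trees with root label > 1: walk down the rightmost path to
the parent x of the first node labeled 0 on the path (subtracting one from the labels
on the way); the maximal zero-labeled suffix of the children of x is the list of
children of S, the rest (with the label of its last element decremented) are the
children of x in T.  Returns the pair (T, S) such that the input is μ_i(S,T). -/
def decT : BTree → BTree × BTree
  | node n ts =>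
    if (ts.getLastD eps).label = 0 then
      let zs := zeroSuffix ts
      let ps := ts.take (ts.length - zs.length)
      (node (n - 1) (if ps.isEmpty then [] else ps.dropLast ++ [decRoot (ps.getLastD eps)]),
       node 1 zs)
    else
      (node (n - 1) (decL ts).1, (decL ts).2)
def decL : List BTree → List BTree × BTree
  | [] => ([], eps)
  | [t] => ([(decT t).1], (decT t).2)
  | t :: ts => (t :: (decL ts).1, (decL ts).2)
end

/-- Restore the root label of a β(0,1)-tree whose root label was forgotten:
ε for a single node, and otherwise one plus the sum of the children's labels. -/
def makeRoot : BTree → BTree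
  | node _ [] => eps
  | node _ ts => node ((ts.map label).sum + 1) ts

/-- Fueled version of the map g.  A β(0,1)-tree with root label 1 is ρ(T₁,…,T_k) where
the Tⱼ are recovered from the children via `makeRoot`, and g maps it to
σ(g(T₁),…,g(T_k)); a β(0,1)-tree U with root label > 1 is μ_i(S,T) where (T,S) = decT U
and i = open(U) + 1 − open(S) (since open(μ_i(S,T)) = i − 1 + open(S)), and g maps it
to ν_i(g(S),g(T)); finally g(ε) = ε. -/
def gF : ℕ → BTree → BTree
  | 0, t => t
  | fuel + 1, t =>
    match t with
    | node 0 _ => t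
    | node 1 cs => sigma (cs.map fun c => gF fuel (makeRoot c))
    | node _ _ =>
      nu (openStat t + 1 - openStat (decT t).2) (gF fuel (decT t).2) (gF fuel (decT t).1)

/-- The map g on β(0,1)-trees: g(ε) = ε, g(ρ(T₁,…,T_k)) = σ(g(T₁),…,g(T_k)), and
g(μ_i(S,T)) = ν_i(g(S), g(T)).  (The number of nodes suffices as fuel since all
recursive calls are on trees with strictly fewer nodes.) -/
def g (t : BTree) : BTree := gF (size t) t


/-! ### The rightmost path -/

theorem label_node (n : ℕ) (ts : List BTree) : label (node n ts) = n := rfl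

theorem children_node (n : ℕ) (ts : List BTree) : children (node n ts) = ts := rfl

theorem childSum_node (n : ℕ) (ts : List BTree) :
    childSum (node n ts) = (ts.map label).sum := rfl

theorem sizeL_append (a b : List BTree) : sizeL (a ++ b) = sizeL a + sizeL b := by
  induction a with
  | nil => simp [sizeL]
  | cons t ts ih => simp [sizeL, ih]; omega

theorem one_le_size (t : BTree) : 1 ≤ size t := by
  cases t; simp [size]

theorem size_le_sizeL {t : BTree} {ts : List BTree} (h : t ∈ ts) : size t ≤ sizeL ts := by
  induction ts with
  | nil => simp at h
  | cons a ts ih =>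
    simp only [sizeL]
    rcases List.mem_cons.1 h with rfl | h
    · omega
    · have := ih h; omega

/-- Induction along the rightmost path: nothing is assumed about the other children. -/
theorem rightmost_induction {P : BTree → Prop} (leaf : ∀ n, P (node n []))
    (step : ∀ n ps c, P c → P (node n (ps ++ [c]))) (t : BTree) : P t := by
  induction hk : size t using Nat.strong_induction_on generalizing t with
  | _ k ih =>
    obtain ⟨n, ts⟩ := t
    rcases List.eq_nil_or_concat' ts with rfl | ⟨ps, c, rfl⟩
    · exact leaf n
    · refine step n ps c (ih _ ?_ c rfl)
      subst hk
      simp only [size, sizeL_append, sizeL]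
      omega

theorem muL_append (S : BTree) (i : ℕ) (ps : List BTree) (c : BTree) :
    muL S i (ps ++ [c]) = ps ++ [muT S i c] := by
  induction ps with
  | nil => simp [muL]
  | cons a ps ih =>
    rw [List.cons_append, muL, ih, List.cons_append]
    simp

theorem nuL_append (T : BTree) (j : ℕ) (ps : List BTree) (c : BTree) :
    nuL T j (ps ++ [c]) = ps ++ [nuT T j c] := by
  induction ps with
  | nil => simp [nuL]
  | cons a ps ih =>
    rw [List.cons_append, nuL, ih, List.cons_append]
    simp

theorem decL_append (ps : List BTree) (c : BTree) :
    decL (ps ++ [c]) = (ps ++ [(decT c).1], (decT c).2) := by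
  induction ps with
  | nil => simp [decL]
  | cons a ps ih =>
    rw [List.cons_append, decL, ih, List.cons_append]
    simp

theorem rpathL_append (ps : List BTree) (c : BTree) : rpathL (ps ++ [c]) = rpath c := by
  induction ps with
  | nil => simp [rpathL]
  | cons a ps ih =>
    cases ps with
    | nil => simp [rpathL]
    | cons b ps => simpa [rpathL] using ih

theorem isOpenNode_leaf (n : ℕ) : isOpenNode (node n []) = true := by
  simp [isOpenNode, children]

theorem isOpenNode_append (n : ℕ) (ps : List BTree) (c : BTree) :
    isOpenNode (node n (ps ++ [c])) = (!c.children.isEmpty && moderate c) := by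
  simp [isOpenNode, children]

/-! ### The decomposition `decT` -/

theorem zeroSuffix_zero {zs : List BTree} (hz : ∀ z ∈ zs, z.label = 0) : zeroSuffix zs = zs := by
  induction zs with
  | nil => simp [zeroSuffix]
  | cons a zs ih =>
    rw [List.forall_mem_cons] at hz
    simp [zeroSuffix, ih hz.2, hz.1]

theorem zeroSuffix_append {ps zs : List BTree} {y : BTree} (hy : y.label ≠ 0)
    (hz : ∀ z ∈ zs, z.label = 0) : zeroSuffix (ps ++ [y] ++ zs) = zs := by
  induction ps with
  | nil => simp [zeroSuffix, zeroSuffix_zero hz, hy]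
  | cons a ps ih =>
    rw [List.cons_append, List.cons_append, zeroSuffix, ih]
    simp only [List.length_append, List.length_singleton]
    rw [if_neg (by omega)]

theorem getLastD_label {zs : List BTree} (hz : ∀ z ∈ zs, z.label = 0) (hne : zs ≠ [])
    (ps : List BTree) : ((ps ++ zs).getLastD eps).label = 0 := by
  rcases List.eq_nil_or_concat' zs with rfl | ⟨q, c, rfl⟩
  · exact absurd rfl hne
  · rw [← List.append_assoc, List.getLastD_concat]
    exact hz c (by simp)

theorem decT_zero (n : ℕ) {zs : List BTree} (hz : ∀ z ∈ zs, z.label = 0) (hne : zs ≠ []) :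
    decT (node n zs) = (node (n - 1) [], node 1 zs) := by
  have h : (zs.getLastD eps).label = 0 := getLastD_label hz hne []
  rw [decT, if_pos h]
  simp [zeroSuffix_zero hz]

theorem decT_split (n : ℕ) (ps : List BTree) {zs : List BTree} {y : BTree} (hy : y.label ≠ 0)
    (hz : ∀ z ∈ zs, z.label = 0) (hne : zs ≠ []) :
    decT (node n (ps ++ [y] ++ zs)) = (node (n - 1) (ps ++ [decRoot y]), node 1 zs) := by
  rw [decT, if_pos (getLastD_label hz hne _)]
  simp only [zeroSuffix_append hy hz]
  have : (ps ++ [y] ++ zs).take ((ps ++ [y] ++ zs).length - zs.length) = ps ++ [y] := by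
    rw [List.length_append, Nat.add_sub_cancel, List.take_left]
  rw [this]
  simp

theorem decT_descend (n : ℕ) (ps : List BTree) {c : BTree} (hc : c.label ≠ 0) :
    decT (node n (ps ++ [c])) = (node (n - 1) (ps ++ [(decT c).1]), (decT c).2) := by
  rw [decT, List.getLastD_concat, if_neg hc, decL_append]

/-- A list of trees splits at its last nonzero label, if there is one. -/
theorem split_zeros (ts : List BTree) : (∀ t ∈ ts, t.label = 0) ∨
    ∃ ps y zs, ts = ps ++ [y] ++ zs ∧ y.label ≠ 0 ∧ ∀ z ∈ zs, z.label = 0 := by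
  induction ts with
  | nil => simp
  | cons a ts ih =>
    rcases ih with h | ⟨ps, y, zs, rfl, hy, hz⟩
    · by_cases ha : a.label = 0
      · left; simpa [ha] using h
      · exact Or.inr ⟨[], a, ts, rfl, ha, h⟩
    · exact Or.inr ⟨a :: ps, y, zs, rfl, hy, hz⟩

theorem sum_label_zero {zs : List BTree} (hz : ∀ z ∈ zs, z.label = 0) :
    (zs.map label).sum = 0 := by
  rw [List.sum_eq_zero_iff]
  simpa using hz

theorem ValidSub.ne_nil {t : BTree} (h : ValidSub t) (h0 : t.label ≠ 0) : t.children ≠ [] := by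
  obtain ⟨n, ts, h1, -, -⟩ := h
  exact fun e => h0 (h1 e)

theorem ValidSub.children_valid {t : BTree} (h : ValidSub t) : ∀ c ∈ t.children, ValidSub c := by
  obtain ⟨n, ts, -, -, h3⟩ := h
  exact h3

theorem ValidSub.label_le {t : BTree} (h : ValidSub t) : t.label ≤ childSum t + 1 := by
  obtain ⟨n, ts, -, h2, -⟩ := h
  exact h2

theorem isBeta_zeros {zs : List BTree} (hz : ∀ z ∈ zs, z.label = 0) (hne : zs ≠ [])
    (hv : ∀ z ∈ zs, ValidSub z) : IsBeta (node 1 zs) :=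
  ⟨fun h => absurd h hne, fun _ => by simp [childSum, children, label, sum_label_zero hz], hv⟩

theorem ValidSub.decRoot {y : BTree} (h : ValidSub y) (h0 : y.label ≠ 0) :
    ValidSub (decRoot y) := by
  refine ⟨_, _, fun e => absurd e (h.ne_nil h0), ?_, h.children_valid⟩
  have := h.label_le
  simp only [childSum] at this
  omega

/-- What `decT` does to a nonleaf node with valid children, apart from the label of the node.
The truncated subtraction is the intended value: the child sum is `0` exactly when the upper part
is a single node. -/
structure DecGood (t : BTree) : Prop where
  label_fst : (decT t).1.label = t.label - 1
  childSum_fst : childSum (decT t).1 = childSum t - 1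
  children_fst : (decT t).1.children = [] ↔ childSum t = 0
  valid_fst : ∀ c ∈ (decT t).1.children, ValidSub c
  beta_snd : IsBeta (decT t).2
  children_snd : (decT t).2.children ≠ []
  size_add : size (decT t).1 + size (decT t).2 = size t + 1

/-- The upper part of `decT` is again valid when the node itself is a valid subtree. -/
theorem DecGood.validSub {t : BTree} (hd : DecGood t) (h : ValidSub t) :
    ValidSub (decT t).1 := by
  have h1 := hd.label_fst
  have h2 := hd.childSum_fst
  have h3 := hd.children_fst
  have h4 := hd.valid_fst
  have h5 := h.label_le
  generalize (decT t).1 = u at *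
  obtain ⟨n, ts⟩ := u
  simp only [label, children, childSum] at *
  refine ⟨n, ts, fun e => ?_, by omega, h4⟩
  have := h3.1 e
  omega

theorem decGood (t : BTree) : t.children ≠ [] → (∀ c ∈ t.children, ValidSub c) → DecGood t := by
  induction t using rightmost_induction with
  | leaf n => intro h; exact absurd rfl h
  | step n ps c ih =>
    intro hne hv
    by_cases hc : c.label = 0
    · rcases split_zeros (ps ++ [c]) with hz | ⟨qs, y, zs, e, hy, hz⟩
      · have hd := decT_zero n hz hne
        have hs := sum_label_zero hz
        constructor <;> rw [hd]
        · rfl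
        · simp only [childSum, children, hs]; rfl
        · simp only [childSum, children, hs]
        · simp [children]
        · exact isBeta_zeros hz hne hv
        · exact hne
        · simp only [size, sizeL]; omega
      · have hzne : zs ≠ [] := by
          rintro rfl
          rw [List.append_nil] at e
          have := (List.append_inj' e rfl).2
          simp only [List.cons.injEq, and_true] at this
          exact hy (this ▸ hc)
        rw [e] at hv ⊢
        have hs := sum_label_zero hz
        have hd := decT_split n qs hy hz hzne
        have hv' : ∀ c ∈ qs ++ [y] ++ zs, ValidSub c := hv
        constructor <;> rw [hd]
        · rfl
        · simp [childSum_node, hs, decRoot, label_node]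
          omega
        · simp [childSum, children, hs, hy]
        · intro c hc
          simp only [children, List.mem_append, List.mem_singleton] at hc
          rcases hc with hc | rfl
          · exact hv' c (by simp [hc])
          · exact (hv' y (by simp)).decRoot hy
        · exact isBeta_zeros hz hzne fun z h => hv' z (by simp [h])
        · exact hzne
        · obtain ⟨m, us⟩ := y
          simp only [size, sizeL_append, sizeL, decRoot, children]; omega
    · have hvc : ValidSub c := hv c (by simp [children])
      have hg := ih (hvc.ne_nil hc) hvc.children_valid
      have hd := decT_descend n ps hc
      constructor <;> rw [hd]
      · rfl
      · simp [childSum, children, hg.label_fst]; omega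
      · simp [childSum, children, hc]
      · intro d hd
        simp only [children, List.mem_append, List.mem_singleton] at hd
        rcases hd with hd | rfl
        · exact hv d (by simp [children, hd])
        · exact hg.validSub hvc
      · exact hg.beta_snd
      · exact hg.children_snd
      · have := hg.size_add
        simp only [size, sizeL_append, sizeL]; omega

/-! ### Independence of the fuel -/

theorem two_le_size {t : BTree} (h : t.children ≠ []) : 2 ≤ size t := by
  obtain ⟨n, ts⟩ := t
  cases ts with
  | nil => exact absurd rfl h
  | cons a ts =>
    have := one_le_size a
    simp only [size, sizeL]; omega

theorem size_makeRoot (t : BTree) : size (makeRoot t) = size t := by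
  obtain ⟨n, _ | ⟨a, ts⟩⟩ := t <;> simp [makeRoot, size, eps]

theorem isBeta_makeRoot {t : BTree} (h : ∀ c ∈ t.children, ValidSub c) : IsBeta (makeRoot t) := by
  obtain ⟨n, _ | ⟨a, ts⟩⟩ := t
  · simp [makeRoot, IsBeta, eps, children, label]
  · exact ⟨fun e => by simp [makeRoot, children] at e, fun _ => rfl, h⟩

theorem makeRoot_setLabel {t : BTree} (h : IsBeta t) (i : ℕ) : makeRoot (setLabel i t) = t := by
  obtain ⟨n, _ | ⟨a, ts⟩⟩ := t
  · have := h.1 rfl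
    simp only [label] at this
    simp [makeRoot, setLabel, children, eps, this]
  · have := h.2.1 (by simp [children])
    simp only [label, childSum, children] at this
    simp [makeRoot, setLabel, children, this]

theorem gF_zero (f : ℕ) (ts : List BTree) : gF (f + 1) (node 0 ts) = node 0 ts := by
  simp [gF]

theorem gF_one (f : ℕ) (cs : List BTree) :
    gF (f + 1) (node 1 cs) = sigma (cs.map fun c => gF f (makeRoot c)) := by
  simp [gF]

theorem gF_large (f : ℕ) {t : BTree} (h : 2 ≤ t.label) :
    gF (f + 1) t = nu (openStat t + 1 - openStat (decT t).2) (gF f (decT t).2)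
      (gF f (decT t).1) := by
  obtain ⟨_ | _ | n, ts⟩ := t
  · simp [label] at h
  · simp [label] at h
  · simp [gF]

theorem gF_eq_gF (f : ℕ) : ∀ (f' : ℕ) (t : BTree), IsBeta t → size t ≤ f → size t ≤ f' →
    gF f t = gF f' t := by
  induction f with
  | zero => intro f' t _ h; have := one_le_size t; omega
  | succ f ih =>
    intro f' t hb h h'
    obtain ⟨f', rfl⟩ : ∃ k, f' = k + 1 := ⟨f' - 1, by have := one_le_size t; omega⟩
    by_cases hl : 2 ≤ t.label
    · have hne : t.children ≠ [] := fun e => by have := hb.1 e; omega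
      have hg := decGood t hne hb.2.2
      have hsum := hb.2.1 hne
      have hne1 : (decT t).1.children ≠ [] := fun e => by
        have := hg.children_fst.1 e; omega
      have hb1 : IsBeta (decT t).1 := by
        refine ⟨fun e => absurd e hne1, fun _ => ?_, hg.valid_fst⟩
        rw [hg.label_fst, hg.childSum_fst]; omega
      have h1 := two_le_size hne1
      have h2 := two_le_size hg.children_snd
      have h3 := hg.size_add
      rw [gF_large _ hl, gF_large _ hl, ih f' _ hb1 (by omega) (by omega),
        ih f' _ hg.beta_snd (by omega) (by omega)]
    · obtain ⟨_ | _ | n, ts⟩ := t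
      · rw [gF_zero, gF_zero]
      · rw [gF_one, gF_one]
        congr 1
        refine List.map_congr_left fun c hc => ?_
        have hs := size_le_sizeL hc
        simp only [size] at h h'
        refine ih f' _ (isBeta_makeRoot (hb.2.2 c hc).children_valid) ?_ ?_ <;>
          rw [size_makeRoot] <;> omega
      · simp [label] at hl

theorem gF_eq_g {f : ℕ} {t : BTree} (hb : IsBeta t) (h : size t ≤ f) : gF f t = g t :=
  gF_eq_gF _ _ _ hb h le_rfl

/-! ### The tree `μ₁(S, T)` -/

theorem muT_leaf (S : BTree) (n : ℕ) : muT S 1 (node n []) = node (n + 1) S.children := by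
  simp [muT, isOpenNode_leaf]

theorem muT_open (S : BTree) (n : ℕ) {ps : List BTree} {c : BTree}
    (h : isOpenNode (node n (ps ++ [c])) = true) :
    muT S 1 (node n (ps ++ [c])) = node (n + 1) (ps ++ [incRoot c] ++ S.children) := by
  rw [muT, h]
  simp

theorem muT_closed (S : BTree) (n : ℕ) {ps : List BTree} {c : BTree}
    (h : isOpenNode (node n (ps ++ [c])) = false) :
    muT S 1 (node n (ps ++ [c])) = node (n + 1) (ps ++ [muT S 1 c]) := by
  rw [muT, h]
  simp [muL_append]

theorem label_muT (S : BTree) (i : ℕ) (t : BTree) : (muT S i t).label = t.label + 1 := by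
  obtain ⟨n, ts⟩ := t
  rw [muT]
  split_ifs <;> rfl

theorem size_incRoot (c : BTree) : size (incRoot c) = size c := by
  cases c; simp [incRoot, children, size]

theorem size_muT (S T : BTree) : size (muT S 1 T) + 1 = size T + size S := by
  have hS : size S = 1 + sizeL S.children := by cases S; rfl
  induction T using rightmost_induction with
  | leaf n => rw [muT_leaf]; simp only [size, sizeL]; omega
  | step n ps c ih =>
    cases h : isOpenNode (node n (ps ++ [c])) with
    | true =>
      rw [muT_open S n h]
      simp only [size, sizeL_append, sizeL, size_incRoot]; omega
    | false =>
      rw [muT_closed S n h]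
      simp only [size, sizeL_append, sizeL]; omega

theorem decRoot_incRoot (c : BTree) : decRoot (incRoot c) = c := by
  cases c; simp [decRoot, incRoot, label, children]

theorem decT_muT {S : BTree} (hz : ∀ z ∈ S.children, z.label = 0) (hne : S.children ≠ [])
    (T : BTree) : decT (muT S 1 T) = (T, node 1 S.children) := by
  induction T using rightmost_induction with
  | leaf n => rw [muT_leaf, decT_zero _ hz hne, Nat.add_sub_cancel]
  | step n ps c ih =>
    cases h : isOpenNode (node n (ps ++ [c])) with
    | true =>
      rw [muT_open S n h, decT_split _ _ (by simp [incRoot, label]) hz hne, decRoot_incRoot,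
        Nat.add_sub_cancel]
    | false =>
      rw [muT_closed S n h, decT_descend _ _ (by simp [label_muT]), ih, Nat.add_sub_cancel]

/-- A leaf or excessive node becomes an excessive node: if it is not a leaf, its label and the
label of its child on the rightmost path both grow by one. -/
theorem childSum_muT_lt {S : BTree} (hz : ∀ z ∈ S.children, z.label = 0) {T : BTree}
    (h : T.children = [] ∨ childSum T < T.label) :
    childSum (muT S 1 T) < (muT S 1 T).label := by
  have hs := sum_label_zero hz
  obtain ⟨n, ts⟩ := T
  rcases List.eq_nil_or_concat' ts with rfl | ⟨ps, c, rfl⟩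
  · simp only [muT_leaf, childSum_node, label_node, hs]; omega
  · replace h : childSum (node n (ps ++ [c])) < n := by
      rcases h with h | h
      · simp [children] at h
      · exact h
    cases ho : isOpenNode (node n (ps ++ [c])) with
    | true =>
      rw [muT_open S n ho]
      simp [childSum_node, label_node, hs, incRoot] at h ⊢
      omega
    | false =>
      rw [muT_closed S n ho]
      simp [childSum_node, label_node, label_muT] at h ⊢
      omega

/-- The rightmost leaf is the only open node of `μ₁(S, T)` when the last child of the root of `S`
is a leaf. -/
theorem countP_isOpenNode_muT {S : BTree} (hz : ∀ z ∈ S.children, z.label = 0)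
    {ss : List BTree} (hS : S.children = ss ++ [eps]) (T : BTree) :
    (rpath (muT S 1 T)).countP isOpenNode = 1 := by
  have key : ∀ (m : ℕ) (ps : List BTree),
      (rpath (node m (ps ++ [eps]))).countP isOpenNode = 1 := by
    intro m ps
    rw [rpath, rpathL_append, List.countP_cons_of_neg]
    · simp [eps, rpath, rpathL, isOpenNode_leaf]
    · simp [isOpenNode_append, eps, children]
  induction T using rightmost_induction with
  | leaf n => rw [muT_leaf, hS, key]
  | step n ps c ih =>
    cases h : isOpenNode (node n (ps ++ [c])) with
    | true => rw [muT_open S n h, hS, ← List.append_assoc, key]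
    | false =>
      rw [muT_closed S n h, rpath, rpathL_append, List.countP_cons_of_neg, ih]
      rw [isOpenNode_append] at h
      have hlt := childSum_muT_lt (T := c) hz (by
        simp only [moderate, Bool.and_eq_false_iff, Bool.not_eq_false', List.isEmpty_iff,
          decide_eq_false_iff_not, not_le] at h
        exact h)
      simp [isOpenNode_append, moderate, hlt]

/-! ### The tree `ρ(T₁, …, T_k)` and the identity -/

theorem rho_eq {Ts : List BTree} (hne : Ts ≠ []) : rho Ts = node 1 (Ts.map (setLabel 0)) := by
  induction Ts with
  | nil => exact absurd rfl hne
  | cons a Ts ih =>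
    cases Ts with
    | nil => simp [rho, oplusList, lam]
    | cons b Ts =>
      have := ih (by simp)
      simp only [rho, List.map_cons] at this
      rw [rho, List.map_cons, List.map_cons, oplusList, this]
      · rfl
      · simp

theorem sigma_append (L : List BTree) (T : BTree) :
    sigma (L ++ [T]) = muT (rho (L.reverse ++ [eps])) 1 T := by
  simp [sigma, mu]

theorem sigma_append_eps (L : List BTree) : sigma (L ++ [eps]) = rho (L.reverse ++ [eps]) := by
  rw [sigma_append, rho_eq (by simp), eps, muT_leaf]
  rfl

theorem isBeta_eps : IsBeta eps := by
  simp [IsBeta, eps, children, label]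

theorem g_eps : g eps = eps := by
  simp [g, eps, size, sizeL, gF]

theorem size_setLabel (i : ℕ) (t : BTree) : size (setLabel i t) = size t := by
  cases t; simp [setLabel, children, size]

theorem gF_rho {f : ℕ} {L : List BTree} (hne : L ≠ []) (hb : ∀ T ∈ L, IsBeta T)
    (hf : size (rho L) ≤ f) : gF f (rho L) = sigma (L.map g) := by
  obtain ⟨f, rfl⟩ : ∃ k, f = k + 1 := ⟨f - 1, by have := one_le_size (rho L); omega⟩
  rw [rho_eq hne] at hf ⊢
  rw [gF_one, List.map_map]
  congr 1
  refine List.map_congr_left fun T hT => ?_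
  have h := size_le_sizeL (List.mem_map_of_mem (f := setLabel 0) hT)
  rw [size_setLabel] at h
  simp only [size] at hf
  rw [Function.comp_apply, makeRoot_setLabel (hb T hT), gF_eq_g (hb T hT) (by omega)]

theorem gF_rho_eps {f : ℕ} {L : List BTree} (hb : ∀ T ∈ L, IsBeta T)
    (hf : size (rho (L.reverse ++ [eps])) ≤ f) :
    gF f (rho (L.reverse ++ [eps])) = rho (L.map g ++ [eps]) := by
  rw [gF_rho (by simp) _ hf, List.map_append, List.map_singleton, g_eps, sigma_append_eps]
  · simp
  · intro T hT
    simp only [List.mem_append, List.mem_reverse, List.mem_singleton] at hT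
    rcases hT with hT | rfl
    · exact hb T hT
    · exact isBeta_eps

theorem nu_rho {i : ℕ} (hi : i ≤ 1) (L : List BTree) (U : BTree) :
    nu i (rho (L ++ [eps])) U = rho (L ++ [U]) := by
  have h0 : i - 1 = 0 := by omega
  rw [nu, h0, rho_eq (by simp), rho_eq (by simp), List.map_append, List.map_append,
    List.map_singleton, List.map_singleton, nuT, nuL_append]
  · simp [setLabel, eps, children, nuT]
  · simp

/-- For all β(0,1)-trees T₁, …, T_k (k ≥ 1), g(σ(T₁,…,T_k)) = ρ(g(T₁),…,g(T_k)). -/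
theorem g_sigma (Ts : List BTree) (hne : Ts ≠ []) (hbeta : ∀ T ∈ Ts, IsBeta T) :
    g (sigma Ts) = rho (Ts.map g) := by
  obtain ⟨L, T, rfl⟩ := (List.eq_nil_or_concat' Ts).resolve_left hne
  have hL : ∀ T ∈ L, IsBeta T := fun T h => hbeta T (by simp [h])
  have hT : IsBeta T := hbeta T (by simp)
  rw [List.map_append, List.map_singleton]
  by_cases hT0 : T.children = []
  · have hTe : T = eps := by
      obtain ⟨n, ts⟩ := T
      have h0 := hT.1 hT0
      simp only [label, children] at h0 hT0
      rw [h0, hT0, eps]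
    rw [hTe, g_eps, sigma_append_eps, g, gF_rho_eps hL le_rfl]
  · rw [sigma_append]
    set S := rho (L.reverse ++ [eps]) with hSdef
    have hS : S = node 1 ((L.reverse ++ [eps]).map (setLabel 0)) := rho_eq (by simp)
    have hSc : S.children = L.reverse.map (setLabel 0) ++ [eps] := by
      rw [hS]; simp [children, setLabel, eps]
    have hz : ∀ z ∈ S.children, z.label = 0 := by
      rw [hS]
      intro z hz
      obtain ⟨t, -, rfl⟩ := List.mem_map.1 hz
      rfl
    have hSne : S.children ≠ [] := by simp [hSc]
    have hdec : decT (muT S 1 T) = (T, S) := by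
      rw [decT_muT hz hSne]
      rw [hS]
      rfl
    have hlab : 2 ≤ (muT S 1 T).label := by
      have := hT.2.1 hT0
      rw [label_muT]; omega
    have hopen : ∀ t : BTree, t.label ≠ 0 → openStat t = (rpath t).countP isOpenNode := by
      rintro ⟨_ | n, ts⟩ h
      · exact absurd rfl h
      · simp [openStat]
    -- `S` is itself `μ₁(S, ε)`, so the count for `μ₁` trees applies to it too.
    have hSmu : muT S 1 eps = S := by
      rw [eps, muT_leaf, hS]; rfl
    have ho1 : openStat (muT S 1 T) = 1 := by
      rw [hopen _ (by omega), countP_isOpenNode_muT hz hSc]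
    have ho2 : openStat S = 1 := by
      have h := countP_isOpenNode_muT hz hSc eps
      rw [hSmu] at h
      rw [hopen _ (by simp [hS, label]), h]
    have hsize := size_muT S T
    have h2 := two_le_size hT0
    have h3 := two_le_size hSne
    obtain ⟨f, hf⟩ : ∃ f, size (muT S 1 T) = f + 1 := ⟨size (muT S 1 T) - 1, by omega⟩
    rw [g, hf, gF_large _ hlab, hdec, ho1, ho2, gF_eq_g hT (by omega),
      gF_rho_eps hL (by rw [← hSdef]; omega), nu_rho (by omega)]

end BTree
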